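/- For Lebesgue-almost every irrational x ∈ (0,1), log L_n(x, 𝒞ℱ, ℱ)/n → π²/(12 log 2) as n → ∞, where L_n(x, 𝒞ℱ, ℱ) is the Lochs index from the continued fraction to the Farey sequence of partitions (equivalently, log(2 q_n(x) + q_{n−1}(x) − 2)/n → π²/(12 log 2) a.e.). -/

import Mathlib

open MeasureTheory Filter Set

noncomputable section

/-- The set `E_n^ℱ` of endpoints of the Farey partition `F_n`: rationals of `[0,1]` whose
denominator in lowest terms is at most `n+1`. -/
def fareyPts (n : ℕ) : Set ℝ :=
  {x | ∃ p q : ℕ, q ≠ 0 ∧ q ≤ n + 1 ∧ p ≤ q ∧ Nat.gcd p q = 1 ∧ x = (p : ℝ) / q}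

/-- The interval `I_n^ℱ(x)` of the Farey partition `F_n` containing `x`: the open interval
between the largest Farey point of order `n+1` below `x` and the smallest one above `x`. -/
def fareyInterval (n : ℕ) (x : ℝ) : Set ℝ :=
  Set.Ioo (sSup (fareyPts n ∩ Set.Iio x)) (sInf (fareyPts n ∩ Set.Ioi x))

/-- The partial quotient `a_{m+1}` of the continued fraction expansion of `x ∈ (0,1)`,
obtained from the Gauss map: `cfa x m = ⌊1 / T_G^m x⌋` where `T_G y = {1/y}`. -/
def cfa (x : ℝ) (m : ℕ) : ℕ := ⌊1 / ((fun y => Int.fract (1 / y))^[m] x)⌋₊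

/-- Numerators of the convergents of `x`, shifted by one: `cfp x (m+1) = p_m`, with
`p_{-1} = 1`, `p_0 = 0`, `p_{m+1} = a_{m+1} p_m + p_{m-1}`. -/
def cfp (x : ℝ) : ℕ → ℕ
  | 0 => 1
  | 1 => 0
  | m + 2 => cfa x m * cfp x (m + 1) + cfp x m

/-- Denominators of the convergents of `x`, shifted by one: `cfq x (m+1) = q_m`, with
`q_{-1} = 0`, `q_0 = 1`, `q_{m+1} = a_{m+1} q_m + q_{m-1}`. -/
def cfq (x : ℝ) : ℕ → ℕ
  | 0 => 0
  | 1 => 1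
  | m + 2 => cfa x m * cfq x (m + 1) + cfq x m

/-- The fundamental interval `I_n^{𝒞ℱ}(x)` of depth `n` of the continued fraction
expansion: the open interval with endpoints `p_n/q_n` and `(p_n+p_{n-1})/(q_n+q_{n-1})`,
the former being the left endpoint iff `n` is even. -/
def cfInterval (x : ℝ) (n : ℕ) : Set ℝ :=
  if Even n then
    Set.Ioo ((cfp x (n + 1) : ℝ) / (cfq x (n + 1) : ℝ))
      (((cfp x (n + 1) + cfp x n : ℕ) : ℝ) / ((cfq x (n + 1) + cfq x n : ℕ) : ℝ))
  else
    Set.Ioo (((cfp x (n + 1) + cfp x n : ℕ) : ℝ) / ((cfq x (n + 1) + cfq x n : ℕ) : ℝ))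
      ((cfp x (n + 1) : ℝ) / (cfq x (n + 1) : ℝ))

/-- The Lochs index `L_n(x, 𝒞ℱ, ℱ)` from the continued fraction sequence of partitions to
the Farey sequence of partitions. -/
def lochsCFtoF (x : ℝ) (n : ℕ) : ℕ :=
  sSup {ℓ : ℕ | cfInterval x n ⊆ fareyInterval ℓ x}

/-- The Lochs index `L_n(x, ℱ, 𝒞ℱ)` from the Farey sequence of partitions to the
continued fraction sequence of partitions. -/
def lochsFtoCF (x : ℝ) (n : ℕ) : ℕ :=
  sSup {ℓ : ℕ | fareyInterval n x ⊆ cfInterval x ℓ}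

/-!
For an irrational `x`, the logarithm of the Lochs index `2 q_n + q_{n-1} - 2` differs by a bounded
amount from the Birkhoff sum `∑_{i < n} -log (T^i x)` of the Gauss map `T`. The transfer operator of
`T` with respect to the Gauss measure contracts Lipschitz constants on `(0, 1)` and maps the
unbounded function `-log` to a Lipschitz function, so the correlations of `-log` along `T` decay
exponentially and the variance of the Birkhoff sums grows at most linearly. Chebyshev and
Borel-Cantelli along the squares, together with the monotonicity of the Birkhoff sums, give the
strong law of large numbers, and the mean of `-log` is
`(log 2)⁻¹ ∑ (-1)^n / (n + 1)^2 = π² / (12 log 2)` by expanding `(1 + x)⁻¹`.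
-/

theorem add_le_of_div_mem_Ioo {a b c d p q : ℤ} (hb : 0 < b) (hd : 0 < d) (hq : 0 < q)
    (hdet : c * b = a * d + 1) (h : (p / q : ℝ) ∈ Ioo (a / b : ℝ) (c / d)) : b + d ≤ q := by
  have hb' : (0 : ℝ) < b := mod_cast hb
  have hd' : (0 : ℝ) < d := mod_cast hd
  have hq' : (0 : ℝ) < q := mod_cast hq
  have hleft : a * q + 1 ≤ p * b := mod_cast (div_lt_div_iff₀ hb' hq').1 h.1
  have hright : p * d + 1 ≤ c * q := mod_cast (div_lt_div_iff₀ hq' hd').1 h.2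
  calc b + d ≤ b * (c * q - p * d) + d * (p * b - a * q) := by nlinarith
    _ = q := by linear_combination q * hdet

theorem disjoint_Ioo_fareyPts_iff {a b c d ℓ : ℕ} (hab : a < b) (hd : 0 < d)
    (hdet : c * b = a * d + 1) :
    Disjoint (Ioo (a / b : ℝ) (c / d)) (fareyPts ℓ) ↔ ℓ + 1 < b + d := by
  have hb : 0 < b := hab.pos
  rw [Set.disjoint_left]
  constructor
  · -- The mediant of the endpoints is a Farey point inside the interval once `b + d ≤ ℓ + 1`.
    intro hdisj
    by_contra! hℓ
    refine hdisj (a := ((a + c : ℕ) : ℝ) / (b + d : ℕ)) ?_ ⟨a + c, b + d, by lia, hℓ, ?_, ?_, rfl⟩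
    · have hdet' : (c : ℝ) * b = a * d + 1 := mod_cast hdet
      push_cast
      constructor <;> rw [div_lt_div_iff₀ (by positivity) (by positivity)] <;> nlinarith
    · have : c ≤ d := by nlinarith
      lia
    · refine Nat.isCoprime_iff_coprime.1 ⟨b, -a, ?_⟩
      push_cast
      linear_combination (mod_cast hdet : (c : ℤ) * b = a * d + 1)
  · rintro hℓ _ hy ⟨p, q, hq, hqℓ, -, -, rfl⟩
    have := add_le_of_div_mem_Ioo (a := a) (b := b) (c := c) (d := d) (p := p) (q := q)
      (mod_cast hb) (mod_cast hd) (by lia) (mod_cast hdet)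
      (by simpa only [Int.cast_natCast] using hy)
    lia

theorem Ioo_subset_fareyInterval_iff {l u x : ℝ} {ℓ : ℕ} (hx : x ∈ Ioo l u)
    (hx01 : x ∈ Ioo (0 : ℝ) 1) (hxℓ : x ∉ fareyPts ℓ) :
    Ioo l u ⊆ fareyInterval ℓ x ↔ Disjoint (Ioo l u) (fareyPts ℓ) := by
  rw [Set.disjoint_left]
  constructor
  · intro hsub y hy hyℓ
    obtain ⟨hly, hyu⟩ := hsub hy
    rcases lt_trichotomy y x with hyx | rfl | hxy
    · exact hly.not_ge (le_csSup ⟨x, fun z hz ↦ hz.2.le⟩ ⟨hyℓ, hyx⟩)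
    · exact hxℓ hyℓ
    · exact hyu.not_ge (csInf_le ⟨x, fun z hz ↦ hz.2.le⟩ ⟨hyℓ, hxy⟩)
  · intro hdisj
    refine Ioo_subset_Ioo (csSup_le ⟨0, ⟨0, 1, by simp⟩, hx01.1⟩ ?_)
      (le_csInf ⟨1, ⟨1, 1, by simp⟩, hx01.2⟩ ?_)
    · rintro y ⟨hyℓ, hyx⟩
      exact not_lt.1 fun hly ↦ hdisj ⟨hly, hyx.trans hx.2⟩ hyℓ
    · rintro y ⟨hyℓ, hxy⟩
      exact not_lt.1 fun hyu ↦ hdisj ⟨hx.1.trans hxy, hyu⟩ hyℓ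

theorem irrational_notMem_fareyPts {x : ℝ} (hx : Irrational x) (ℓ : ℕ) : x ∉ fareyPts ℓ := by
  rintro ⟨p, q, -, -, -, -, rfl⟩
  exact hx ⟨p / q, by push_cast; rfl⟩

theorem sSup_setOf_Ioo_subset_fareyInterval {a b c d : ℕ} (hb : 0 < b) (hd : 0 < d)
    (hdet : c * b = a * d + 1) {x : ℝ} (hx : Irrational x) (hx1 : x < 1)
    (hmem : x ∈ Ioo (a / b : ℝ) (c / d)) :
    sSup {ℓ : ℕ | Ioo (a / b : ℝ) (c / d) ⊆ fareyInterval ℓ x} = b + d - 2 := by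
  have hx0 : 0 < x := lt_of_le_of_lt (by positivity) hmem.1
  have hab : a < b := by
    exact_mod_cast (div_lt_one (by positivity : (0 : ℝ) < b)).1 (hmem.1.trans hx1)
  have hset : {ℓ : ℕ | Ioo (a / b : ℝ) (c / d) ⊆ fareyInterval ℓ x} = Iic (b + d - 2) := by
    ext ℓ
    rw [Set.mem_ofPred_eq,
      Ioo_subset_fareyInterval_iff hmem ⟨hx0, hx1⟩ (irrational_notMem_fareyPts hx ℓ),
      disjoint_Ioo_fareyPts_iff hab hd hdet, mem_Iic]
    lia
  rw [hset, csSup_Iic]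

/-- The Gauss map of the continued fraction algorithm, with the junk value `0` at `0`. -/
def gaussMap (x : ℝ) : ℝ := Int.fract (1 / x)

theorem gaussMap_mem_Ico (x : ℝ) : gaussMap x ∈ Ico (0 : ℝ) 1 :=
  ⟨Int.fract_nonneg _, Int.fract_lt_one _⟩

theorem irrational_gaussMap {x : ℝ} (hx : Irrational x) : Irrational (gaussMap x) := by
  rw [gaussMap, one_div, ← Int.self_sub_floor]
  exact (irrational_inv_iff.2 hx).sub_intCast _

theorem irrational_iterate_gaussMap {x : ℝ} (hx : Irrational x) (n : ℕ) :
    Irrational (gaussMap^[n] x) := by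
  induction n with
  | zero => exact hx
  | succ n ih => exact Function.iterate_succ_apply' gaussMap n x ▸ irrational_gaussMap ih

theorem mul_gaussMap_add_floor {x : ℝ} (hx : 0 < x) : x * (gaussMap x + ⌊1 / x⌋₊) = 1 := by
  rw [natCast_floor_eq_intCast_floor (by positivity), gaussMap, Int.fract_add_floor,
    mul_one_div_cancel hx.ne']

theorem cfp_mul_cfq_sub_cfp_mul_cfq (x : ℝ) (n : ℕ) :
    (cfp x n : ℤ) * cfq x (n + 1) - cfp x (n + 1) * cfq x n = (-1) ^ n := by
  induction n with
  | zero => simp [cfq, cfp]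
  | succ n ih =>
    simp only [cfp, cfq, Nat.cast_add, Nat.cast_mul, pow_succ, ← ih]
    ring

section Convergents

variable {x : ℝ} (hx : Irrational x) (hx01 : x ∈ Ioo (0 : ℝ) 1) (n : ℕ)
include hx hx01

theorem iterate_gaussMap_mem_Ioo : gaussMap^[n] x ∈ Ioo (0 : ℝ) 1 := by
  have hirr := irrational_iterate_gaussMap hx n
  rcases n with - | n
  · exact hx01
  · rw [Function.iterate_succ_apply'] at hirr ⊢
    have hmem := gaussMap_mem_Ico (gaussMap^[n] x)
    exact ⟨hmem.1.lt_of_ne' hirr.ne_zero, hmem.2⟩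

theorem iterate_gaussMap_mul_succ_add_cfa :
    gaussMap^[n] x * (gaussMap^[n + 1] x + cfa x n) = 1 := by
  rw [Function.iterate_succ_apply']
  exact mul_gaussMap_add_floor (iterate_gaussMap_mem_Ioo hx hx01 n).1

theorem cfa_pos : 0 < cfa x n := by
  obtain ⟨h0, h1⟩ := iterate_gaussMap_mem_Ioo hx hx01 n
  exact Nat.floor_pos.2 ((one_le_div h0).2 h1.le)

theorem cfq_succ_pos : 0 < cfq x (n + 1) := by
  induction n with
  | zero => exact Nat.one_pos
  | succ n ih => exact Nat.add_pos_left (Nat.mul_pos (cfa_pos hx hx01 n) ih) _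

theorem cfq_le_cfq_succ : cfq x n ≤ cfq x (n + 1) := by
  rcases n with - | n
  · exact Nat.zero_le _
  · exact (Nat.le_mul_of_pos_left _ (cfa_pos hx hx01 n)).trans (Nat.le_add_right _ _)

theorem two_le_cfq {n : ℕ} (hn : 3 ≤ n) : 2 ≤ cfq x n := by
  obtain ⟨m, rfl⟩ := Nat.exists_eq_add_of_le' hn
  exact Nat.add_le_add (Nat.mul_pos (cfa_pos hx hx01 (m + 1)) (cfq_succ_pos hx hx01 (m + 1)))
    (cfq_succ_pos hx hx01 m)

theorem cfq_add_mul_prod_iterate_gaussMap :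
    (cfq x (n + 1) + gaussMap^[n] x * cfq x n) * ∏ i ∈ Finset.range n, gaussMap^[i] x = 1 := by
  induction n with
  | zero => simp [cfq]
  | succ n ih =>
    rw [Finset.prod_range_succ]
    simp only [cfq, Nat.cast_add, Nat.cast_mul]
    linear_combination ih + (∏ i ∈ Finset.range n, gaussMap^[i] x) * (cfq x (n + 1) : ℝ) *
      iterate_gaussMap_mul_succ_add_cfa hx hx01 n

theorem cfp_add_iterate_gaussMap_mul :
    cfp x (n + 1) + gaussMap^[n] x * cfp x n =
      x * (cfq x (n + 1) + gaussMap^[n] x * cfq x n) := by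
  induction n with
  | zero => simp [cfq, cfp]
  | succ n ih =>
    apply mul_left_cancel₀ (iterate_gaussMap_mem_Ioo hx hx01 n).1.ne'
    simp only [cfp, cfq, Nat.cast_add, Nat.cast_mul]
    linear_combination ih + (cfp x (n + 1) - x * cfq x (n + 1) : ℝ) *
      iterate_gaussMap_mul_succ_add_cfa hx hx01 n

theorem mem_cfInterval : x ∈ cfInterval x n := by
  obtain ⟨ht0, ht1⟩ := iterate_gaussMap_mem_Ioo hx hx01 n
  have hrel := cfp_add_iterate_gaussMap_mul hx hx01 n
  have hdet : (cfp x n : ℝ) * cfq x (n + 1) - cfp x (n + 1) * cfq x n = (-1) ^ n :=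
    mod_cast cfp_mul_cfq_sub_cfp_mul_cfq x n
  have hq : (0 : ℝ) < cfq x (n + 1) := mod_cast cfq_succ_pos hx hx01 n
  set t := gaussMap^[n] x
  have hqt : 0 < cfq x (n + 1) + t * cfq x n := by positivity
  rw [← div_eq_iff hqt.ne'] at hrel
  rcases n.even_or_odd with hn | hn
  · rw [hn.neg_one_pow] at hdet
    rw [cfInterval, if_pos hn]
    push_cast
    refine ⟨lt_of_lt_of_eq ?_ hrel, lt_of_eq_of_lt hrel.symm ?_⟩ <;>
      rw [div_lt_div_iff₀ (by positivity) (by positivity)] <;> nlinarith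
  · rw [hn.neg_one_pow] at hdet
    rw [cfInterval, if_neg (Nat.not_even_iff_odd.2 hn)]
    push_cast
    refine ⟨lt_of_lt_of_eq ?_ hrel, lt_of_eq_of_lt hrel.symm ?_⟩ <;>
      rw [div_lt_div_iff₀ (by positivity) (by positivity)] <;> nlinarith

theorem lochsCFtoF_eq : lochsCFtoF x n = 2 * cfq x (n + 1) + cfq x n - 2 := by
  have hmem := mem_cfInterval hx hx01 n
  have hdet := cfp_mul_cfq_sub_cfp_mul_cfq x n
  have hq := cfq_succ_pos hx hx01 n
  rw [lochsCFtoF]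
  rcases n.even_or_odd with hn | hn
  · rw [hn.neg_one_pow] at hdet
    rw [cfInterval, if_pos hn] at hmem ⊢
    rw [sSup_setOf_Ioo_subset_fareyInterval hq (by lia) (by zify; linarith) hx hx01.2 hmem]
    lia
  · rw [hn.neg_one_pow] at hdet
    rw [cfInterval, if_neg (Nat.not_even_iff_odd.2 hn)] at hmem ⊢
    rw [sSup_setOf_Ioo_subset_fareyInterval (by lia) hq (by zify; linarith) hx hx01.2 hmem]
    lia

theorem birkhoffSum_gaussMap_neg_log :
    birkhoffSum gaussMap (fun y ↦ -Real.log y) n x =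
      Real.log (cfq x (n + 1) + gaussMap^[n] x * cfq x n) := by
  rw [birkhoffSum, Finset.sum_neg_distrib,
    ← Real.log_prod fun i _ ↦ (iterate_gaussMap_mem_Ioo hx hx01 i).1.ne', ← Real.log_inv,
    eq_inv_of_mul_eq_one_left (cfq_add_mul_prod_iterate_gaussMap hx hx01 n)]

theorem abs_log_lochsCFtoF_sub_birkhoffSum_le {n : ℕ} (hn : 2 ≤ n) :
    |Real.log (lochsCFtoF x n) - birkhoffSum gaussMap (fun y ↦ -Real.log y) n x| ≤
      Real.log 3 := by
  obtain ⟨ht0, ht1⟩ := iterate_gaussMap_mem_Ioo hx hx01 n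
  rw [birkhoffSum_gaussMap_neg_log hx hx01]
  have hL := lochsCFtoF_eq hx hx01 n
  have hq2 : 2 ≤ cfq x (n + 1) := two_le_cfq hx hx01 (by lia)
  have hle := cfq_le_cfq_succ hx hx01 n
  have hle' : (cfq x n : ℝ) ≤ cfq x (n + 1) := mod_cast hle
  have hqL : (cfq x (n + 1) : ℝ) ≤ lochsCFtoF x n := by norm_cast; lia
  have hLq : (lochsCFtoF x n : ℝ) ≤ 3 * cfq x (n + 1) := by norm_cast; lia
  have hq0 : (0 : ℝ) < cfq x (n + 1) := by positivity
  set Q := (cfq x (n + 1) : ℝ) + gaussMap^[n] x * cfq x n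
  have hqQ : (cfq x (n + 1) : ℝ) ≤ Q := le_add_of_nonneg_right (by positivity)
  have hQq : Q ≤ 2 * cfq x (n + 1) := by
    linarith [mul_le_of_le_one_left (Nat.cast_nonneg (α := ℝ) (cfq x n)) ht1.le]
  have hL0 := hq0.trans_le hqL
  have hQ0 := hq0.trans_le hqQ
  have hlogL := Real.log_le_log hL0 (by linarith : (lochsCFtoF x n : ℝ) ≤ 3 * Q)
  have hlogQ := Real.log_le_log hQ0 (by linarith : Q ≤ 3 * lochsCFtoF x n)
  rw [Real.log_mul three_ne_zero hQ0.ne'] at hlogL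
  rw [Real.log_mul three_ne_zero hL0.ne'] at hlogQ
  rw [abs_le]
  constructor <;> linarith

end Convergents

section Probability

open ProbabilityTheory

variable {Ω : Type*} [MeasurableSpace Ω] {μ : Measure Ω}

theorem ae_tendsto_sub_integral_of_summable_variance [IsFiniteMeasure μ] {X : ℕ → Ω → ℝ}
    (hX : ∀ n, MemLp (X n) 2 μ) (hvar : Summable fun n ↦ Var[X n; μ]) :
    ∀ᵐ ω ∂μ, Tendsto (fun n ↦ X n ω - μ[X n]) atTop (nhds 0) := by
  have hmem (n : ℕ) : MemLp (fun ω ↦ X n ω - μ[X n]) 2 μ := (hX n).sub (memLp_const _)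
  have hsum : ∑' n, eLpNorm (fun ω ↦ (X n ω - μ[X n]) ^ 2) 1 μ ≠ ⊤ := by
    simp_rw [eLpNorm_one_eq_lintegral_enorm, enorm_pow]
    change ∑' n, eVar[X n; μ] ≠ ⊤
    simp_rw [← (hX _).ofReal_variance_eq]
    exact hvar.tsum_ofReal_ne_top
  filter_upwards [summable_norm_of_tsum_eLpNorm_ne_top le_rfl
    (fun n ↦ ((hmem n).1.pow 2)) hsum] with ω hω
  have hsq : Tendsto (fun n ↦ ‖X n ω - μ[X n]‖ ^ 2) atTop (nhds 0) := by
    simpa using hω.tendsto_atTop_zero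
  rw [tendsto_zero_iff_norm_tendsto_zero]
  simpa [Real.sqrt_sq_eq_abs] using hsq.sqrt

theorem ae_tendsto_div_of_monotone_of_variance_le [IsFiniteMeasure μ] {S : ℕ → Ω → ℝ} {m K : ℝ}
    (hS : ∀ n, MemLp (S n) 2 μ) (hmono : ∀ᵐ ω ∂μ, Monotone (S · ω))
    (hmean : ∀ n : ℕ, μ[S n] = n * m) (hvar : ∀ n : ℕ, Var[S n; μ] ≤ n * K) :
    ∀ᵐ ω ∂μ, Tendsto (fun n : ℕ ↦ S n ω / n) atTop (nhds m) := by
  have hsum : Summable fun n : ℕ ↦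
      Var[fun ω ↦ (((n + 1) ^ 2 : ℕ) : ℝ)⁻¹ * S ((n + 1) ^ 2) ω; μ] := by
    refine .of_nonneg_of_le (fun n ↦ variance_nonneg _ _) (fun n ↦ ?_)
      (((summable_nat_add_iff 1).2 hasSum_zeta_two.summable).mul_right K)
    rw [variance_const_mul]
    calc ((((n + 1) ^ 2 : ℕ) : ℝ)⁻¹) ^ 2 * Var[S ((n + 1) ^ 2); μ]
        ≤ ((((n + 1) ^ 2 : ℕ) : ℝ)⁻¹) ^ 2 * (((n + 1) ^ 2 : ℕ) * K) := by gcongr; exact hvar _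
      _ = 1 / ((n + 1 : ℕ) : ℝ) ^ 2 * K := by push_cast; field_simp
  filter_upwards [hmono, ae_tendsto_sub_integral_of_summable_variance
    (fun n ↦ (hS ((n + 1) ^ 2)).const_mul _) hsum] with ω hω hsq
  refine tendsto_div_of_monotone_of_exists_subseq_tendsto_div _ _ hω fun a ha ↦
    ⟨fun n ↦ (n + 1) ^ 2, ?_, ?_, ?_⟩
  · have hratio : Tendsto (fun n : ℕ ↦ (1 + 1 / ((n : ℝ) + 1)) ^ 2) atTop (nhds 1) := by
      simpa using (tendsto_one_div_add_atTop_nhds_zero_nat (𝕜 := ℝ)).const_add 1 |>.pow 2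
    filter_upwards [hratio.eventually_le_const ha] with n hn
    calc (((n + 1 + 1) ^ 2 : ℕ) : ℝ) = (1 + 1 / ((n : ℝ) + 1)) ^ 2 * ((n + 1) ^ 2 : ℕ) := by
          push_cast; field_simp
      _ ≤ a * ((n + 1) ^ 2 : ℕ) := by gcongr
  · exact tendsto_atTop_mono (fun n ↦ by rw [id]; nlinarith) tendsto_id
  · refine (tendsto_sub_nhds_zero_iff.1 (hsq.congr fun n ↦ ?_))
    rw [integral_const_mul, hmean]
    push_cast
    field_simp

section BirkhoffSum

variable {T : Ω → Ω} (hT : MeasurePreserving T μ μ) {f : Ω → ℝ}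
include hT

theorem memLp_birkhoffSum {p : ENNReal} (hf : MemLp f p μ) (n : ℕ) :
    MemLp (birkhoffSum T f n) p μ :=
  memLp_finsetSum _ fun i _ ↦ hf.comp_measurePreserving (hT.iterate i)

theorem integral_comp_of_measurePreserving (hf : AEStronglyMeasurable f μ) :
    ∫ ω, f (T ω) ∂μ = ∫ ω, f ω ∂μ := by
  conv_rhs => rw [← hT.map_eq]
  exact (integral_map hT.aemeasurable (hT.map_eq.symm ▸ hf)).symm

theorem integral_birkhoffSum (hf : Integrable f μ) (n : ℕ) :
    ∫ ω, birkhoffSum T f n ω ∂μ = n * ∫ ω, f ω ∂μ := by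
  have hcomp (i : ℕ) : ∫ ω, f (T^[i] ω) ∂μ = ∫ ω, f ω ∂μ :=
    integral_comp_of_measurePreserving (hT.iterate i) hf.1
  have hint (i : ℕ) : Integrable (fun ω ↦ f (T^[i] ω)) μ :=
    (hT.iterate i).integrable_comp_of_integrable hf
  simp_rw [birkhoffSum]
  rw [integral_finsetSum _ fun i _ ↦ hint i]
  simp [hcomp]

theorem variance_birkhoffSum_le [IsFiniteMeasure μ] (hf : MemLp f 2 μ) {C : ℝ}
    (hC : ∀ n, ∑ i ∈ Finset.range n, cov[f, f ∘ T^[i + 1]; μ] ≤ C) (n : ℕ) :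
    Var[birkhoffSum T f n; μ] ≤ n * (Var[f; μ] + 2 * C) := by
  induction n with
  | zero => simp
  | succ n ih =>
    have hsucc : birkhoffSum T f (n + 1) = f + birkhoffSum T f n ∘ T :=
      funext fun ω ↦ birkhoffSum_succ' T f n ω
    have hcov : cov[f, birkhoffSum T f n ∘ T; μ] ≤ C := by
      have hsum : birkhoffSum T f n ∘ T = ∑ i ∈ Finset.range n, f ∘ T^[i + 1] := by
        ext ω; simp [birkhoffSum]
      rw [hsum, covariance_sum_right'
        (fun i _ ↦ hf.comp_measurePreserving (hT.iterate (i + 1))) hf]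
      exact hC n
    have hmem := memLp_birkhoffSum hT hf n
    have hinv : Var[birkhoffSum T f n ∘ T; μ] = Var[birkhoffSum T f n; μ] :=
      hT.variance_fun_comp hmem.1.aemeasurable
    rw [hsucc, variance_add hf (hmem.comp_measurePreserving hT), hinv]
    push_cast
    linarith

end BirkhoffSum

end Probability

/-- The inverse branches of the Gauss map: `gaussBranch k` maps `[0, 1)` onto the points whose first
continued fraction digit is `k + 1`. -/
def gaussBranch (k : ℕ) (x : ℝ) : ℝ := (k + 1 + x)⁻¹

/-- The probability that the Gauss map reached `x` along the branch `gaussBranch k`, with respect to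
the Gauss measure. -/
def gaussWeight (k : ℕ) (x : ℝ) : ℝ := (1 + x) / ((k + 1 + x) * (k + 2 + x))

/-- The density of the Gauss measure, meaningful on `(0, 1)`. -/
def gaussDensity (x : ℝ) : ℝ := ((1 + x) * Real.log 2)⁻¹

/-- The Gauss measure, the absolutely continuous invariant probability measure of the Gauss map. -/
def gaussMeasure : Measure ℝ :=
  (volume.restrict (Ioo 0 1)).withDensity fun x ↦ ENNReal.ofReal (gaussDensity x)

/-- The transfer operator of the Gauss map with respect to the Gauss measure. -/
def gaussTransfer (g : ℝ → ℝ) (x : ℝ) : ℝ := ∑' k, gaussWeight k x * g (gaussBranch k x)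

theorem gaussMap_gaussBranch (k : ℕ) {x : ℝ} (hx : x ∈ Ico (0 : ℝ) 1) :
    gaussMap (gaussBranch k x) = x := by
  have hcomm : (k : ℝ) + 1 + x = x + (k + 1 : ℕ) := by push_cast; ring
  rw [gaussMap, gaussBranch, one_div, inv_inv, hcomm, Int.fract_add_natCast, Int.fract_eq_self.2 hx]

theorem gaussBranch_mem_Ioo (k : ℕ) {x : ℝ} (hx : 0 < x) : gaussBranch k x ∈ Ioo (0 : ℝ) 1 :=
  ⟨by unfold gaussBranch; positivity, inv_lt_one_of_one_lt₀ (by linarith [k.cast_nonneg (α := ℝ)])⟩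

theorem injOn_gaussBranch (k : ℕ) : InjOn (gaussBranch k) (Ico 0 1) :=
  LeftInvOn.injOn fun _ ↦ gaussMap_gaussBranch k

theorem image_gaussBranch (k : ℕ) :
    gaussBranch k '' Ico 0 1 = Ioi 0 ∩ (fun x ↦ ⌊x⁻¹⌋₊) ⁻¹' {k + 1} := by
  ext x
  constructor
  · rintro ⟨t, ⟨ht0, ht1⟩, rfl⟩
    refine ⟨by rw [mem_Ioi, gaussBranch]; positivity, ?_⟩
    rw [mem_preimage, gaussBranch, inv_inv, mem_singleton_iff, Nat.floor_eq_iff (by positivity)]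
    push_cast
    constructor <;> linarith
  · rintro ⟨hx : 0 < x, hk⟩
    obtain ⟨hle, hlt⟩ := (Nat.floor_eq_iff (inv_nonneg.2 hx.le)).1 hk
    push_cast at hle hlt
    exact ⟨x⁻¹ - (k + 1), ⟨by linarith, by linarith⟩, by rw [gaussBranch, add_sub_cancel, inv_inv]⟩

theorem measurableSet_image_gaussBranch (k : ℕ) : MeasurableSet (gaussBranch k '' Ico 0 1) := by
  rw [image_gaussBranch]
  exact measurableSet_Ioi.inter ((measurable_inv.nat_floor) (measurableSet_singleton _))

theorem pairwise_disjoint_image_gaussBranch :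
    Pairwise (Function.onFun Disjoint fun k : ℕ ↦ gaussBranch k '' Ico 0 1) := by
  intro i j hij
  simp only [Function.onFun, image_gaussBranch]
  exact (Disjoint.preimage _ (by simpa using hij)).mono inter_subset_right inter_subset_right

theorem iUnion_image_gaussBranch : ⋃ k, gaussBranch k '' Ico 0 1 = Ioc 0 1 := by
  ext x
  simp only [image_gaussBranch, mem_iUnion, mem_inter_iff, mem_Ioi, mem_preimage,
    mem_singleton_iff, exists_and_left, mem_Ioc]
  refine and_congr_right fun hx ↦ ?_
  rw [← one_le_inv₀ hx, ← Nat.floor_pos, Nat.exists_eq_add_one]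

theorem hasDerivAt_gaussBranch (k : ℕ) {x : ℝ} (hx : 0 ≤ x) :
    HasDerivAt (gaussBranch k) (-((k + 1 + x) ^ 2)⁻¹) x := by
  have := ((hasDerivAt_id' x).const_add ((k : ℝ) + 1)).fun_inv (by positivity)
  rwa [neg_div, one_div] at this

theorem hasSum_setIntegral_gaussBranch {g : ℝ → ℝ} (hg : IntegrableOn g (Ioo 0 1)) :
    HasSum (fun k : ℕ ↦ ∫ x in Ioo (0 : ℝ) 1, ((k + 1 + x) ^ 2)⁻¹ * g (gaussBranch k x))
      (∫ x in Ioo (0 : ℝ) 1, g x) := by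
  rw [← integrableOn_Ioc_iff_integrableOn_Ioo, ← iUnion_image_gaussBranch] at hg
  rw [← integral_Ioc_eq_integral_Ioo, ← iUnion_image_gaussBranch]
  refine (hasSum_integral_iUnion measurableSet_image_gaussBranch
    pairwise_disjoint_image_gaussBranch hg).congr_fun fun k ↦ ?_
  rw [integral_image_eq_integral_abs_deriv_smul measurableSet_Ico
    (fun x hx ↦ (hasDerivAt_gaussBranch k hx.1).hasDerivWithinAt) (injOn_gaussBranch k),
    integral_Ico_eq_integral_Ioo]
  simp

theorem integrableOn_gaussBranch {g : ℝ → ℝ} (hg : IntegrableOn g (Ioo 0 1)) (k : ℕ) :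
    IntegrableOn (fun x : ℝ ↦ ((k + 1 + x) ^ 2)⁻¹ * g (gaussBranch k x)) (Ioo 0 1) := by
  rw [← integrableOn_Ioc_iff_integrableOn_Ioo, ← iUnion_image_gaussBranch] at hg
  have := (integrableOn_image_iff_integrableOn_abs_deriv_smul measurableSet_Ico
    (fun x hx ↦ (hasDerivAt_gaussBranch k hx.1).hasDerivWithinAt) (injOn_gaussBranch k) g).1
    (hg.mono_set (subset_iUnion (fun k ↦ gaussBranch k '' Ico 0 1) k))
  simpa using this.mono_set Ioo_subset_Ico_self

theorem setIntegral_tsum_gaussBranch {g : ℝ → ℝ} (hg : IntegrableOn g (Ioo 0 1)) :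
    ∫ x in Ioo (0 : ℝ) 1, ∑' k : ℕ, ((k + 1 + x) ^ 2)⁻¹ * g (gaussBranch k x) =
      ∫ x in Ioo (0 : ℝ) 1, g x := by
  refine (hasSum_integral_of_summable_integral_norm (integrableOn_gaussBranch hg) ?_).unique
    (hasSum_setIntegral_gaussBranch hg)
  simpa using (hasSum_setIntegral_gaussBranch hg.norm).summable

theorem gaussDensity_pos {x : ℝ} (hx : 0 ≤ x) : 0 < gaussDensity x := by
  have := Real.log_pos one_lt_two
  unfold gaussDensity
  positivity

theorem measurable_gaussDensity : Measurable gaussDensity := by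
  unfold gaussDensity
  fun_prop

theorem integral_gaussMeasure (g : ℝ → ℝ) :
    ∫ x, g x ∂gaussMeasure = ∫ x in Ioo 0 1, gaussDensity x * g x := by
  rw [gaussMeasure, integral_withDensity_eq_integral_toReal_smul
    measurable_gaussDensity.ennreal_ofReal (by simp)]
  refine setIntegral_congr_fun measurableSet_Ioo fun x hx ↦ ?_
  simp [ENNReal.toReal_ofReal (gaussDensity_pos hx.1.le).le]

theorem integrable_gaussMeasure_iff {g : ℝ → ℝ} :
    Integrable g gaussMeasure ↔ IntegrableOn (fun x ↦ gaussDensity x * g x) (Ioo 0 1) := by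
  rw [gaussMeasure, integrable_withDensity_iff_integrable_smul'
    measurable_gaussDensity.ennreal_ofReal (by simp)]
  refine integrableOn_congr_fun (fun x hx ↦ ?_) measurableSet_Ioo
  simp [ENNReal.toReal_ofReal (gaussDensity_pos hx.1.le).le]

theorem ae_gaussMeasure : ae gaussMeasure = ae (volume.restrict (Ioo (0 : ℝ) 1)) := by
  refine (withDensity_absolutelyContinuous _ _).ae_le.antisymm
    (withDensity_absolutelyContinuous' measurable_gaussDensity.ennreal_ofReal.aemeasurable ?_).ae_le
  filter_upwards [ae_restrict_mem measurableSet_Ioo] with x hx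
  simpa using gaussDensity_pos hx.1.le

theorem ae_gaussMeasure_mem_Ioo : ∀ᵐ x ∂gaussMeasure, x ∈ Ioo (0 : ℝ) 1 := by
  rw [ae_gaussMeasure]
  exact ae_restrict_mem measurableSet_Ioo

theorem setIntegral_gaussDensity : ∫ x in Ioo 0 1, gaussDensity x = 1 := by
  simp_rw [gaussDensity, mul_inv]
  rw [integral_mul_const, ← integral_Ioc_eq_integral_Ioo,
    ← intervalIntegral.integral_of_le zero_le_one,
    intervalIntegral.integral_comp_add_left (fun x ↦ x⁻¹), integral_inv_of_pos (by norm_num)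
    (by norm_num)]
  norm_num

instance : IsProbabilityMeasure gaussMeasure where
  measure_univ := by
    rw [gaussMeasure, withDensity_apply _ .univ, Measure.restrict_univ,
      ← ofReal_integral_eq_lintegral_ofReal
        (integrable_of_integral_eq_one setIntegral_gaussDensity),
      setIntegral_gaussDensity, ENNReal.ofReal_one]
    filter_upwards [ae_restrict_mem measurableSet_Ioo] with x hx using (gaussDensity_pos hx.1.le).le

theorem inv_sq_mul_gaussDensity_gaussBranch (k : ℕ) {x : ℝ} (hx : 0 ≤ x) :
    ((k + 1 + x) ^ 2)⁻¹ * gaussDensity (gaussBranch k x) = gaussDensity x * gaussWeight k x := by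
  have := Real.log_pos one_lt_two
  have hk : (k : ℝ) + 1 + x + 1 ≠ 0 := by positivity
  unfold gaussDensity gaussBranch gaussWeight
  field_simp
  ring

theorem integral_gaussTransfer {g : ℝ → ℝ} (hg : Integrable g gaussMeasure) :
    ∫ x, gaussTransfer g x ∂gaussMeasure = ∫ x, g x ∂gaussMeasure := by
  rw [integral_gaussMeasure, integral_gaussMeasure,
    ← setIntegral_tsum_gaussBranch (integrable_gaussMeasure_iff.1 hg)]
  refine setIntegral_congr_fun measurableSet_Ioo fun x hx ↦ ?_
  simp only [gaussTransfer, ← tsum_mul_left]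
  refine tsum_congr fun k ↦ ?_
  rw [← mul_assoc, ← mul_assoc, inv_sq_mul_gaussDensity_gaussBranch k hx.1.le]

theorem gaussTransfer_mul_comp_gaussMap (g f : ℝ → ℝ) {x : ℝ} (hx : x ∈ Ico (0 : ℝ) 1) :
    gaussTransfer (fun y ↦ g y * f (gaussMap y)) x = gaussTransfer g x * f x := by
  simp only [gaussTransfer, gaussMap_gaussBranch _ hx, ← mul_assoc, tsum_mul_right]

theorem integral_mul_comp_gaussMap {g f : ℝ → ℝ}
    (hgf : Integrable (fun x ↦ g x * f (gaussMap x)) gaussMeasure) :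
    ∫ x, g x * f (gaussMap x) ∂gaussMeasure = ∫ x, gaussTransfer g x * f x ∂gaussMeasure := by
  rw [← integral_gaussTransfer hgf]
  refine integral_congr_ae ?_
  filter_upwards [ae_gaussMeasure_mem_Ioo] with x hx
  exact gaussTransfer_mul_comp_gaussMap g f (Ioo_subset_Ico_self hx)

theorem gaussWeight_nonneg (k : ℕ) {x : ℝ} (hx : 0 ≤ x) : 0 ≤ gaussWeight k x := by
  unfold gaussWeight
  positivity

theorem sum_range_gaussWeight (N : ℕ) {x : ℝ} (hx : 0 ≤ x) :
    ∑ k ∈ Finset.range N, gaussWeight k x = N / (x + N + 1) := by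
  induction N with
  | zero => simp
  | succ N ih =>
    rw [Finset.sum_range_succ, ih, gaussWeight]
    push_cast
    field_simp
    ring

theorem hasSum_gaussWeight {x : ℝ} (hx : 0 ≤ x) : HasSum (gaussWeight · x) 1 := by
  rw [hasSum_iff_tendsto_nat_of_nonneg fun k ↦ gaussWeight_nonneg k hx]
  simp_rw [sum_range_gaussWeight _ hx, add_comm x, add_assoc]
  exact tendsto_natCast_div_add_atTop (x + 1)

theorem gaussTransfer_const (c : ℝ) {x : ℝ} (hx : 0 ≤ x) : gaussTransfer (fun _ ↦ c) x = c := by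
  rw [gaussTransfer, tsum_mul_right, (hasSum_gaussWeight hx).tsum_eq, one_mul]

theorem measurable_gaussMap : Measurable gaussMap := by
  unfold gaussMap
  fun_prop

theorem measurePreserving_gaussMap : MeasurePreserving gaussMap gaussMeasure gaussMeasure := by
  refine ⟨measurable_gaussMap, Measure.ext fun s hs ↦ ?_⟩
  rw [Measure.map_apply measurable_gaussMap hs, ← measureReal_eq_measureReal_iff,
    ← integral_indicator_one (measurable_gaussMap hs), ← integral_indicator_one hs]
  have hind (x : ℝ) : (1 : ℝ) * s.indicator 1 (gaussMap x) = (gaussMap ⁻¹' s).indicator 1 x :=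
    one_mul _
  have hint : Integrable (fun x ↦ (1 : ℝ) * s.indicator 1 (gaussMap x)) gaussMeasure := by
    simp_rw [hind]
    exact (integrable_const (1 : ℝ)).indicator (measurable_gaussMap hs)
  calc ∫ x, (gaussMap ⁻¹' s).indicator 1 x ∂gaussMeasure
      = ∫ x, (1 : ℝ) * s.indicator 1 (gaussMap x) ∂gaussMeasure := by simp_rw [hind]
    _ = ∫ x, gaussTransfer (fun _ ↦ 1) x * s.indicator 1 x ∂gaussMeasure :=
        integral_mul_comp_gaussMap hint
    _ = ∫ x, s.indicator 1 x ∂gaussMeasure := by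
        refine integral_congr_ae ?_
        filter_upwards [ae_gaussMeasure_mem_Ioo] with x hx
        rw [gaussTransfer_const 1 hx.1.le, one_mul]

section Contraction

theorem abs_gaussWeight_sub_le (k : ℕ) {x y : ℝ} (hx : 0 ≤ x) (hy : 0 ≤ y) :
    |gaussWeight k x - gaussWeight k y| ≤ 1 / (k + 2 : ℝ) ^ 2 * |x - y| := by
  have hsub : gaussWeight k x - gaussWeight k y =
      (k * (k + 1) - (1 + x) * (1 + y)) /
        ((k + 1 + x) * (k + 1 + y) * ((k + 2 + x) * (k + 2 + y))) * (x - y) := by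
    unfold gaussWeight
    field_simp
    ring
  have hk : (0 : ℝ) ≤ k := k.cast_nonneg
  have hnum : |(k : ℝ) * (k + 1) - (1 + x) * (1 + y)| ≤ (k + 1 + x) * (k + 1 + y) := by
    rw [abs_sub_le_iff]
    constructor <;> nlinarith [mul_nonneg hx hy, mul_nonneg hk hx, mul_nonneg hk hy]
  rw [hsub, abs_mul, abs_div, abs_of_pos (show 0 < (k + 1 + x) * (k + 1 + y) * _ by positivity)]
  refine mul_le_mul_of_nonneg_right ?_ (abs_nonneg _)
  rw [div_le_div_iff₀ (by positivity) (by positivity), one_mul]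
  exact mul_le_mul hnum (by nlinarith) (by positivity) (by positivity)

theorem abs_gaussBranch_sub_le (k : ℕ) {x y : ℝ} (hx : 0 ≤ x) (hy : 0 ≤ y) :
    |gaussBranch k x - gaussBranch k y| ≤ 1 / (k + 1 : ℝ) ^ 2 * |x - y| := by
  unfold gaussBranch
  rw [inv_sub_inv (by positivity) (by positivity), abs_div, add_sub_add_left_eq_sub,
    abs_sub_comm y x, div_eq_inv_mul, ← one_div, sq, abs_of_pos (by positivity)]
  gcongr ?_ / (?_ * ?_) * _ <;> linarith

theorem abs_gaussTransfer_sub_le {g : ℝ → ℝ} {x y : ℝ} (hx : 0 ≤ x) (hy : 0 ≤ y)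
    (hgx : Summable fun k ↦ gaussWeight k x * g (gaussBranch k x))
    (hgy : Summable fun k ↦ gaussWeight k y * g (gaussBranch k y)) (c : ℝ) {d : ℕ → ℝ} {D : ℝ}
    (hd : HasSum d D)
    (hbound : ∀ k, gaussWeight k x * |g (gaussBranch k x) - g (gaussBranch k y)| +
      1 / (k + 2 : ℝ) ^ 2 * |x - y| * |g (gaussBranch k y) - c| ≤ d k) :
    |gaussTransfer g x - gaussTransfer g y| ≤ D := by
  have hwx := hasSum_gaussWeight hx
  have hwy := hasSum_gaussWeight hy
  -- Both weight sequences have total mass `1`, so the constant `c` can be subtracted for free.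
  have hsplit := ((hgx.hasSum.sub hgy.hasSum).sub ((hwx.sub hwy).mul_right c))
  rw [sub_self, zero_mul, sub_zero] at hsplit
  refine hsplit.norm_le_of_bounded hd fun k ↦ (le_trans ?_ (hbound k))
  calc |gaussWeight k x * g (gaussBranch k x) - gaussWeight k y * g (gaussBranch k y) -
        (gaussWeight k x - gaussWeight k y) * c|
      = |gaussWeight k x * (g (gaussBranch k x) - g (gaussBranch k y)) +
        (gaussWeight k x - gaussWeight k y) * (g (gaussBranch k y) - c)| := by congr 1; ring
    _ ≤ gaussWeight k x * |g (gaussBranch k x) - g (gaussBranch k y)| +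
        |gaussWeight k x - gaussWeight k y| * |g (gaussBranch k y) - c| := by
      rw [← abs_of_nonneg (gaussWeight_nonneg k hx), ← abs_mul, ← abs_mul,
        abs_of_nonneg (gaussWeight_nonneg k hx)]
      exact abs_add_le _ _
    _ ≤ _ := by
      gcongr
      exact abs_gaussWeight_sub_le k hx hy

theorem summable_gaussWeight_mul {g : ℝ → ℝ} {x B : ℝ} (hx : 0 ≤ x)
    (hg : ∀ k, |g (gaussBranch k x)| ≤ B) :
    Summable fun k ↦ gaussWeight k x * g (gaussBranch k x) := by
  refine ((hasSum_gaussWeight hx).summable.mul_right B).of_norm_bounded fun k ↦ ?_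
  rw [norm_mul, Real.norm_of_nonneg (gaussWeight_nonneg k hx)]
  exact mul_le_mul_of_nonneg_left (hg k) (gaussWeight_nonneg k hx)

theorem hasSum_one_div_nat_add_two_sq :
    HasSum (fun k : ℕ ↦ 1 / (k + 2 : ℝ) ^ 2) (Real.pi ^ 2 / 6 - 1) := by
  simpa [Finset.sum_range_succ] using (hasSum_nat_add_iff' 2).2 hasSum_zeta_two

theorem gaussWeight_mul_one_div_sq_le (k : ℕ) {x : ℝ} (hx : 0 ≤ x) :
    gaussWeight k x * (1 / (k + 1 : ℝ) ^ 2) ≤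
      gaussWeight k x * (1 / 4) + if k = 0 then 3 / 8 else 0 := by
  cases k with
  | zero =>
    have : gaussWeight 0 x ≤ 1 / 2 := by
      unfold gaussWeight
      rw [div_le_div_iff₀ (by positivity) (by positivity)]
      push_cast
      nlinarith
    simp only [Nat.cast_zero, if_true]
    linarith
  | succ k =>
    rw [if_neg k.succ_ne_zero, add_zero]
    refine mul_le_mul_of_nonneg_left ?_ (gaussWeight_nonneg _ hx)
    push_cast
    gcongr
    nlinarith [k.cast_nonneg (α := ℝ)]

section Lipschitz

variable {r : ℝ → ℝ} {K : NNReal} (hr : LipschitzOnWith K r (Ioo 0 1))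
include hr

theorem abs_sub_half_le_of_lipschitzOnWith {x : ℝ} (hx : x ∈ Ioo (0 : ℝ) 1) :
    |r x - r (1 / 2)| ≤ K / 2 := by
  have hdist : |x - 1 / 2| ≤ 1 / 2 := by rw [abs_le]; constructor <;> linarith [hx.1, hx.2]
  calc |r x - r (1 / 2)| ≤ K * |x - 1 / 2| := hr.dist_le_mul x hx _ (by norm_num)
    _ ≤ K * (1 / 2) := by gcongr
    _ = K / 2 := by ring

theorem abs_le_of_lipschitzOnWith {x : ℝ} (hx : x ∈ Ioo (0 : ℝ) 1) :
    |r x| ≤ |r (1 / 2)| + K / 2 := by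
  linarith [abs_sub_abs_le_abs_sub (r x) (r (1 / 2)), abs_sub_half_le_of_lipschitzOnWith hr hx]

/- The weights contribute `1 / 4 + 3 / 8` through `1 / (k + 1) ^ 2 ≤ 1 / 4 + (3 / 4) [k = 0]`, and
their variation at most half of `π ^ 2 / 6 - 1`, which is less than `2 / 3`. -/
theorem lipschitzOnWith_gaussTransfer :
    LipschitzOnWith (23 / 24 * K) (gaussTransfer r) (Ioo 0 1) := by
  refine .of_dist_le_mul fun x hx y hy ↦ ?_
  have hsummable {z : ℝ} (hz : z ∈ Ioo (0 : ℝ) 1) :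
      Summable fun k ↦ gaussWeight k z * r (gaussBranch k z) :=
    summable_gaussWeight_mul hz.1.le fun k ↦
      abs_le_of_lipschitzOnWith hr (gaussBranch_mem_Ioo k hz.1)
  have hsum := ((((hasSum_gaussWeight hx.1.le).mul_right (1 / 4)).add
    (hasSum_ite_eq 0 (3 / 8 : ℝ))).add
      (hasSum_one_div_nat_add_two_sq.mul_right (1 / 2))).mul_right (K * |x - y|)
  refine (abs_gaussTransfer_sub_le hx.1.le hy.1.le (hsummable hx) (hsummable hy) (r (1 / 2)) hsum
    fun k ↦ ?_).trans ?_
  · have hbranch : gaussWeight k x * |r (gaussBranch k x) - r (gaussBranch k y)| ≤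
        gaussWeight k x * (1 / (k + 1 : ℝ) ^ 2) * (K * |x - y|) := by
      rw [mul_assoc, mul_left_comm _ (K : ℝ)]
      refine mul_le_mul_of_nonneg_left ?_ (gaussWeight_nonneg k hx.1.le)
      refine (hr.dist_le_mul _ (gaussBranch_mem_Ioo k hx.1) _ (gaussBranch_mem_Ioo k hy.1)).trans ?_
      exact mul_le_mul_of_nonneg_left (abs_gaussBranch_sub_le k hx.1.le hy.1.le) K.2
    have hosc : 1 / (k + 2 : ℝ) ^ 2 * |x - y| * |r (gaussBranch k y) - r (1 / 2)| ≤
        1 / (k + 2 : ℝ) ^ 2 * |x - y| * (K / 2) := by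
      gcongr
      exact abs_sub_half_le_of_lipschitzOnWith hr (gaussBranch_mem_Ioo k hy.1)
    have hweight : gaussWeight k x * (1 / (k + 1 : ℝ) ^ 2) ≤
        gaussWeight k x * (1 / 4) + if k = 0 then 3 / 8 else 0 :=
      gaussWeight_mul_one_div_sq_le k hx.1.le
    have := mul_le_mul_of_nonneg_right hweight (show 0 ≤ K * |x - y| by positivity)
    linarith
  · have hpi : Real.pi ^ 2 / 6 - 1 ≤ 2 / 3 := by nlinarith [Real.pi_lt_d4, Real.pi_pos]
    rw [NNReal.coe_mul, mul_assoc, Real.dist_eq]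
    push_cast
    gcongr
    linarith

end Lipschitz

theorem neg_log_gaussBranch (k : ℕ) (x : ℝ) :
    -Real.log (gaussBranch k x) = Real.log (k + 1 + x) := by
  rw [gaussBranch, Real.log_inv, neg_neg]

theorem abs_log_sub_log_le {s t : ℝ} (hs : 1 ≤ s) (ht : 1 ≤ t) :
    |Real.log s - Real.log t| ≤ |s - t| := by
  wlog hst : t ≤ s generalizing s t
  · rw [abs_sub_comm, abs_sub_comm s]
    exact this ht hs (le_of_not_ge hst)
  have ht0 : 0 < t := by linarith
  have hs0 : 0 < s := by linarith
  rw [abs_of_nonneg (sub_nonneg.2 (Real.log_le_log ht0 hst)), abs_of_nonneg (sub_nonneg.2 hst),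
    ← Real.log_div hs0.ne' ht0.ne']
  calc Real.log (s / t) ≤ s / t - 1 := Real.log_le_sub_one_of_pos (by positivity)
    _ = (s - t) / t := by field_simp
    _ ≤ s - t := div_le_self (sub_nonneg.2 hst) ht

theorem summable_log_div_nat_sq : Summable fun n : ℕ ↦ Real.log n / (n : ℝ) ^ 2 := by
  refine Summable.of_nonneg_of_le (fun n ↦ by positivity) (fun n ↦ ?_)
    ((Real.summable_nat_rpow.2 (show (-3 / 2 : ℝ) < -1 by norm_num)).mul_left 2)
  rcases n.eq_zero_or_pos with rfl | hn
  · simp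
  have hn' : (0 : ℝ) < n := by exact_mod_cast hn
  rw [div_le_iff₀ (by positivity), mul_assoc, ← Real.rpow_natCast (n : ℝ) 2, ← Real.rpow_add hn']
  refine (Real.log_le_rpow_div hn'.le (one_half_pos (α := ℝ))).trans_eq ?_
  norm_num
  ring

theorem summable_gaussWeight_mul_neg_log {x : ℝ} (hx : x ∈ Ioo (0 : ℝ) 1) :
    Summable fun k ↦ gaussWeight k x * -Real.log (gaussBranch k x) := by
  refine Summable.of_nonneg_of_le (fun k ↦ ?_) (fun k ↦ ?_)
    (((summable_nat_add_iff 2).2 summable_log_div_nat_sq).mul_left 4)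
  · rw [neg_log_gaussBranch]
    exact mul_nonneg (gaussWeight_nonneg k hx.1.le)
      (Real.log_nonneg (by linarith [hx.1, k.cast_nonneg (α := ℝ)]))
  · have hk := k.cast_nonneg (α := ℝ)
    have hweight : gaussWeight k x ≤ 4 / (k + 2 : ℝ) ^ 2 := by
      unfold gaussWeight
      rw [div_le_div_iff₀ (by nlinarith [hx.1]) (by positivity)]
      nlinarith [hx.1, hx.2, mul_nonneg hk hx.1.le, mul_nonneg hk (sub_nonneg.2 hx.2.le)]
    have hlog : Real.log (k + 1 + x) ≤ Real.log (k + 2) :=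
      Real.log_le_log (by linarith [hx.1]) (by linarith [hx.2])
    rw [neg_log_gaussBranch, mul_div_left_comm, mul_comm (Real.log _)]
    push_cast
    exact mul_le_mul hweight hlog (Real.log_nonneg (by linarith [hx.1])) (by positivity)

theorem exists_lipschitzOnWith_gaussTransfer_neg_log :
    ∃ K, LipschitzOnWith K (gaussTransfer fun x ↦ -Real.log x) (Ioo 0 1) := by
  obtain ⟨S, hS⟩ := (summable_nat_add_iff 2).2 summable_log_div_nat_sq
  refine ⟨1 + S.toNNReal, .of_dist_le_mul fun x hx y hy ↦ ?_⟩
  rw [NNReal.coe_add, NNReal.coe_one, Real.coe_toNNReal S (hS.nonneg fun k ↦ by positivity)]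
  have hsum := ((hasSum_gaussWeight hx.1.le).add hS).mul_right |x - y|
  refine abs_gaussTransfer_sub_le (g := fun x ↦ -Real.log x) hx.1.le hy.1.le
    (summable_gaussWeight_mul_neg_log hx) (summable_gaussWeight_mul_neg_log hy) 0 hsum
    fun k ↦ ?_
  have hlog := abs_log_sub_log_le (show (1 : ℝ) ≤ k + 1 + x by linarith [hx.1])
    (show (1 : ℝ) ≤ k + 1 + y by linarith [hy.1])
  rw [add_sub_add_left_eq_sub] at hlog
  have hmono : Real.log (k + 1 + y) ≤ Real.log (k + 2) :=
    Real.log_le_log (by linarith [hy.1]) (by linarith [hy.2])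
  simp only [neg_log_gaussBranch, sub_zero]
  rw [abs_of_nonneg (Real.log_nonneg (by linarith [hy.1])), add_mul]
  push_cast
  have hw := gaussWeight_nonneg k hx.1.le
  rw [mul_right_comm, one_div_mul_eq_div]
  gcongr

end Contraction

section DecayOfCorrelations

open ProbabilityTheory

section Lipschitz

variable {r : ℝ → ℝ} {K : NNReal} (hr : LipschitzOnWith K r (Ioo 0 1))
include hr

theorem memLp_gaussMeasure_of_lipschitzOnWith (p : ENNReal) : MemLp r p gaussMeasure := by
  have hmeas : AEStronglyMeasurable r gaussMeasure := by
    have := hr.continuousOn.aestronglyMeasurable (μ := volume) measurableSet_Ioo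
    exact this.mono_ac (withDensity_absolutelyContinuous _ _)
  refine .of_bound hmeas (|r (1 / 2)| + K / 2) ?_
  filter_upwards [ae_gaussMeasure_mem_Ioo] with x hx using abs_le_of_lipschitzOnWith hr hx

theorem abs_sub_integral_gaussMeasure_le {x : ℝ} (hx : x ∈ Ioo (0 : ℝ) 1) :
    |r x - ∫ y, r y ∂gaussMeasure| ≤ K := by
  have hint := (memLp_gaussMeasure_of_lipschitzOnWith hr 1).integrable le_rfl
  have hsub : r x - ∫ y, r y ∂gaussMeasure = ∫ y, (r x - r y) ∂gaussMeasure := by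
    rw [integral_sub (integrable_const _) hint]
    simp
  rw [hsub]
  have hle := norm_integral_le_of_norm_le_const (μ := gaussMeasure) (f := fun y ↦ r x - r y)
    (C := K) ?_
  · simpa using hle
  filter_upwards [ae_gaussMeasure_mem_Ioo] with y hy
  calc |r x - r y| ≤ K * |x - y| := hr.dist_le_mul x hx y hy
    _ ≤ K * 1 := by
      gcongr
      rw [abs_le]
      constructor <;> linarith [hx.1, hx.2, hy.1, hy.2]
    _ = K := mul_one _

theorem abs_covariance_gaussMeasure_le {f : ℝ → ℝ} (hf : Integrable f gaussMeasure) :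
    |cov[r, f; gaussMeasure]| ≤ K * ∫ x, |f x - ∫ y, f y ∂gaussMeasure| ∂gaussMeasure := by
  rw [covariance, ← Real.norm_eq_abs, ← integral_const_mul]
  refine norm_integral_le_of_norm_le ((hf.sub (integrable_const _)).abs.const_mul (K : ℝ)) ?_
  filter_upwards [ae_gaussMeasure_mem_Ioo] with x hx
  rw [norm_mul]
  exact mul_le_mul_of_nonneg_right (abs_sub_integral_gaussMeasure_le hr hx) (abs_nonneg _)

end Lipschitz

theorem covariance_comp_gaussMap {g f : ℝ → ℝ} (hg : MemLp g 2 gaussMeasure)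
    (hg' : MemLp (gaussTransfer g) 2 gaussMeasure) (hf : MemLp f 2 gaussMeasure) :
    cov[g, f ∘ gaussMap; gaussMeasure] = cov[gaussTransfer g, f; gaussMeasure] := by
  have hfT := hf.comp_measurePreserving measurePreserving_gaussMap
  rw [covariance_eq_sub hg hfT, covariance_eq_sub hg' hf,
    integral_gaussTransfer (hg.integrable one_le_two)]
  congr 1
  · exact integral_mul_comp_gaussMap (hg.integrable_mul hfT)
  · exact congrArg _ (integral_comp_of_measurePreserving measurePreserving_gaussMap hf.1)

theorem abs_covariance_iterate_gaussMap_le {r f : ℝ → ℝ} {K : NNReal}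
    (hr : LipschitzOnWith K r (Ioo 0 1)) (hf : MemLp f 2 gaussMeasure) (n : ℕ) :
    |cov[r, f ∘ gaussMap^[n]; gaussMeasure]| ≤
      K * (∫ x, |f x - ∫ y, f y ∂gaussMeasure| ∂gaussMeasure) * (23 / 24) ^ n := by
  induction n generalizing r K with
  | zero => simpa using abs_covariance_gaussMeasure_le hr (hf.integrable one_le_two)
  | succ n ih =>
    have hUr := lipschitzOnWith_gaussTransfer hr
    have hstep : cov[r, f ∘ gaussMap^[n + 1]; gaussMeasure] =
        cov[gaussTransfer r, f ∘ gaussMap^[n]; gaussMeasure] :=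
      covariance_comp_gaussMap (memLp_gaussMeasure_of_lipschitzOnWith hr 2)
        (memLp_gaussMeasure_of_lipschitzOnWith hUr 2)
        (hf.comp_measurePreserving (measurePreserving_gaussMap.iterate n))
    rw [hstep]
    refine (ih hUr).trans_eq ?_
    push_cast
    ring

theorem exists_sum_covariance_iterate_gaussMap_le {g f : ℝ → ℝ} {K : NNReal}
    (hg : MemLp g 2 gaussMeasure) (hg' : LipschitzOnWith K (gaussTransfer g) (Ioo 0 1))
    (hf : MemLp f 2 gaussMeasure) :
    ∃ C, ∀ n, ∑ i ∈ Finset.range n, cov[g, f ∘ gaussMap^[i + 1]; gaussMeasure] ≤ C := by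
  let A := K * ∫ x, |f x - ∫ y, f y ∂gaussMeasure| ∂gaussMeasure
  have hbound (i : ℕ) : cov[g, f ∘ gaussMap^[i + 1]; gaussMeasure] ≤ A * (23 / 24) ^ i := by
    have hstep : cov[g, f ∘ gaussMap^[i + 1]; gaussMeasure] =
        cov[gaussTransfer g, f ∘ gaussMap^[i]; gaussMeasure] :=
      covariance_comp_gaussMap hg (memLp_gaussMeasure_of_lipschitzOnWith hg' 2)
        (hf.comp_measurePreserving (measurePreserving_gaussMap.iterate i))
    rw [hstep]
    exact (le_abs_self _).trans (abs_covariance_iterate_gaussMap_le hg' hf i)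
  have hsum : Summable fun i : ℕ ↦ A * (23 / 24 : ℝ) ^ i :=
    (summable_geometric_of_lt_one (by norm_num) (by norm_num)).mul_left A
  exact ⟨_, fun n ↦ (Finset.sum_le_sum fun i _ ↦ hbound i).trans
    (hsum.sum_le_tsum _ fun i _ ↦ by positivity)⟩

end DecayOfCorrelations

section Moments

theorem integrable_gaussMeasure_of_integrableOn {g : ℝ → ℝ} (hg : IntegrableOn g (Ioo 0 1)) :
    Integrable g gaussMeasure := by
  refine integrable_gaussMeasure_iff.2 (Integrable.bdd_mul (c := (Real.log 2)⁻¹) hg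
    measurable_gaussDensity.aestronglyMeasurable ?_)
  have hlog := Real.log_pos one_lt_two
  filter_upwards [ae_restrict_mem measurableSet_Ioo] with x hx
  rw [Real.norm_of_nonneg (gaussDensity_pos hx.1.le).le]
  exact inv_anti₀ hlog (le_mul_of_one_le_left hlog.le (by linarith [hx.1]))

theorem log_sq_le_rpow {x : ℝ} (hx : x ∈ Ioo (0 : ℝ) 1) :
    Real.log x ^ 2 ≤ 16 * x ^ (-(1 / 2) : ℝ) := by
  have hlt := Real.abs_log_mul_self_rpow_lt x (1 / 4) hx.1 hx.2.le (by norm_num)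
  have hsq : (Real.log x * x ^ (1 / 4 : ℝ)) ^ 2 ≤ 4 ^ 2 :=
    sq_le_sq.2 (hlt.le.trans_eq (by norm_num))
  rw [mul_pow, ← Real.rpow_mul_natCast hx.1.le] at hsq
  rw [Real.rpow_neg hx.1.le, ← div_eq_mul_inv, le_div_iff₀ (Real.rpow_pos_of_pos hx.1 _)]
  norm_num at hsq ⊢
  exact hsq

theorem memLp_neg_log_gaussMeasure : MemLp (fun x ↦ -Real.log x) 2 gaussMeasure := by
  rw [memLp_two_iff_integrable_sq (by fun_prop)]
  refine integrable_gaussMeasure_of_integrableOn ?_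
  have hrpow : IntegrableOn (fun x : ℝ ↦ 16 * x ^ (-(1 / 2) : ℝ)) (Ioo 0 1) :=
    ((intervalIntegrable_iff_integrableOn_Ioo_of_le zero_le_one).1
      (intervalIntegral.intervalIntegrable_rpow' (by norm_num))).const_mul 16
  refine hrpow.mono' (by fun_prop) ?_
  filter_upwards [ae_restrict_mem measurableSet_Ioo] with x hx
  rw [neg_sq, Real.norm_of_nonneg (sq_nonneg _)]
  exact log_sq_le_rpow hx

theorem hasDerivAt_pow_mul_neg_log (n : ℕ) {x : ℝ} (hx : x ≠ 0) :
    HasDerivAt (fun y ↦ y ^ n * -(y * Real.log y) / (n + 1) + y ^ (n + 1) / ((n : ℝ) + 1) ^ 2)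
      (x ^ n * -Real.log x) x := by
  have hpow := hasDerivAt_pow (n + 1) x
  have := ((hpow.fun_mul (Real.hasDerivAt_log hx)).fun_neg.div_const ((n : ℝ) + 1)).fun_add
    (hpow.div_const (((n : ℝ) + 1) ^ 2))
  refine (this.congr_of_eventuallyEq (.of_forall fun y ↦ by ring)).congr_deriv ?_
  rw [Nat.add_sub_cancel]
  push_cast
  field_simp
  ring

theorem intervalIntegrable_pow_mul_neg_log (n : ℕ) (a b : ℝ) :
    IntervalIntegrable (fun x : ℝ ↦ x ^ n * -Real.log x) volume a b :=
  intervalIntegral.intervalIntegrable_log'.neg.continuousOn_mul (by fun_prop)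

theorem integrableOn_pow_mul_neg_log (n : ℕ) :
    IntegrableOn (fun x : ℝ ↦ x ^ n * -Real.log x) (Ioo 0 1) :=
  (intervalIntegrable_iff_integrableOn_Ioo_of_le zero_le_one).1
    (intervalIntegrable_pow_mul_neg_log n 0 1)

theorem setIntegral_pow_mul_neg_log (n : ℕ) :
    ∫ x in Ioo (0 : ℝ) 1, x ^ n * -Real.log x = 1 / ((n : ℝ) + 1) ^ 2 := by
  have hcont : Continuous fun y : ℝ ↦
      y ^ n * -(y * Real.log y) / (n + 1) + y ^ (n + 1) / ((n : ℝ) + 1) ^ 2 := by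
    have := Real.continuous_mul_log
    fun_prop
  rw [← integral_Ioc_eq_integral_Ioo, ← intervalIntegral.integral_of_le zero_le_one,
    intervalIntegral.integral_eq_sub_of_hasDerivAt_of_le zero_le_one hcont.continuousOn
      (fun x hx ↦ hasDerivAt_pow_mul_neg_log n hx.1.ne')
      (intervalIntegrable_pow_mul_neg_log n 0 1)]
  simp

theorem hasSum_neg_one_pow_div_sq :
    HasSum (fun n : ℕ ↦ (-1 : ℝ) ^ n * (1 / ((n : ℝ) + 1) ^ 2)) (Real.pi ^ 2 / 12) := by
  have hcos := hasSum_one_div_nat_pow_mul_cos one_ne_zero (x := 1 / 2) (by norm_num)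
  have hval : (-1 : ℝ) ^ (1 + 1) * (2 * Real.pi) ^ (2 * 1) / 2 / (2 * 1).factorial *
      bernoulliFun (2 * 1) (1 / 2) = -(Real.pi ^ 2 / 12) := by
    rw [mul_one, bernoulliFun_two, Nat.factorial_two]
    push_cast
    ring
  rw [← bernoulliFun, hval, ← hasSum_nat_add_iff' 1] at hcos
  have hvalue : -(-(Real.pi ^ 2 / 12) - ∑ n ∈ Finset.range 1,
      1 / (n : ℝ) ^ (2 * 1) * Real.cos (2 * Real.pi * n * (1 / 2))) = Real.pi ^ 2 / 12 := by
    simp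
  refine hvalue ▸ hcos.neg.congr_fun fun n ↦ ?_
  have hangle : 2 * Real.pi * (n + 1 : ℕ) * (1 / 2) = (n + 1 : ℕ) * Real.pi := by ring
  rw [hangle, Real.cos_nat_mul_pi, pow_succ]
  push_cast
  ring

theorem setIntegral_inv_one_add_mul_neg_log :
    ∫ x in Ioo (0 : ℝ) 1, (1 + x)⁻¹ * -Real.log x = Real.pi ^ 2 / 12 := by
  have hnorm (n : ℕ) : ∫ x in Ioo (0 : ℝ) 1, ‖(-1 : ℝ) ^ n * (x ^ n * -Real.log x)‖ =
      1 / ((n : ℝ) + 1) ^ 2 := by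
    rw [← setIntegral_pow_mul_neg_log n]
    refine setIntegral_congr_fun measurableSet_Ioo fun x hx ↦ ?_
    have hnonneg : 0 ≤ x ^ n * -Real.log x :=
      mul_nonneg (pow_nonneg hx.1.le _) (neg_nonneg.2 (Real.log_nonpos hx.1.le hx.2.le))
    simp only [norm_mul ((-1 : ℝ) ^ n), norm_pow, norm_neg, norm_one, one_pow, one_mul,
      Real.norm_of_nonneg hnonneg]
  have hsummable : Summable fun n : ℕ ↦
      ∫ x in Ioo (0 : ℝ) 1, ‖(-1 : ℝ) ^ n * (x ^ n * -Real.log x)‖ := by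
    simp_rw [hnorm]
    exact_mod_cast (summable_nat_add_iff 1).2 hasSum_zeta_two.summable
  have hsum := hasSum_integral_of_summable_integral_norm
    (fun n ↦ (integrableOn_pow_mul_neg_log n).const_mul ((-1) ^ n)) hsummable
  simp_rw [integral_const_mul, setIntegral_pow_mul_neg_log] at hsum
  rw [← hsum.unique hasSum_neg_one_pow_div_sq]
  refine setIntegral_congr_fun measurableSet_Ioo fun x hx ↦ ?_
  have hgeom := hasSum_geometric_of_norm_lt_one (ξ := -x)
    (by rw [norm_neg, Real.norm_of_nonneg hx.1.le]; exact hx.2)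
  rw [sub_neg_eq_add] at hgeom
  rw [← (hgeom.mul_right (-Real.log x)).tsum_eq]
  exact tsum_congr fun n ↦ by rw [neg_pow, mul_assoc]

theorem integral_neg_log_gaussMeasure :
    ∫ x, -Real.log x ∂gaussMeasure = Real.pi ^ 2 / (12 * Real.log 2) := by
  have hdensity (x : ℝ) :
      gaussDensity x * -Real.log x = (Real.log 2)⁻¹ * ((1 + x)⁻¹ * -Real.log x) := by
    rw [gaussDensity, mul_inv]
    ring
  simp_rw [integral_gaussMeasure, hdensity]
  rw [integral_const_mul, setIntegral_inv_one_add_mul_neg_log]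
  ring

end Moments

section LawOfLargeNumbers

open ProbabilityTheory

theorem monotone_birkhoffSum_gaussMap_neg_log {x : ℝ} (hx : x ∈ Ico (0 : ℝ) 1) :
    Monotone fun n ↦ birkhoffSum gaussMap (fun y ↦ -Real.log y) n x := by
  refine monotone_nat_of_le_succ fun n ↦ ?_
  have hn : gaussMap^[n] x ∈ Ico (0 : ℝ) 1 := by
    cases n with
    | zero => exact hx
    | succ n => rw [Function.iterate_succ_apply']; exact gaussMap_mem_Ico _
  rw [birkhoffSum_succ]
  linarith [Real.log_nonpos hn.1 hn.2.le]

theorem ae_tendsto_birkhoffSum_gaussMap_neg_log_div : ∀ᵐ x ∂gaussMeasure,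
    Tendsto (fun n : ℕ ↦ birkhoffSum gaussMap (fun y ↦ -Real.log y) n x / n) atTop
      (nhds (Real.pi ^ 2 / (12 * Real.log 2))) := by
  have hT := measurePreserving_gaussMap
  have hf := memLp_neg_log_gaussMeasure
  obtain ⟨K, hK⟩ := exists_lipschitzOnWith_gaussTransfer_neg_log
  obtain ⟨C, hC⟩ := exists_sum_covariance_iterate_gaussMap_le hf hK hf
  refine ae_tendsto_div_of_monotone_of_variance_le (memLp_birkhoffSum hT hf) ?_ (fun n ↦ ?_)
    (variance_birkhoffSum_le hT hf hC)
  · filter_upwards [ae_gaussMeasure_mem_Ioo] with x hx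
    exact monotone_birkhoffSum_gaussMap_neg_log (Ioo_subset_Ico_self hx)
  · rw [integral_birkhoffSum hT (hf.integrable one_le_two), integral_neg_log_gaussMeasure]

theorem ae_irrational : ∀ᵐ x : ℝ, Irrational x :=
  (countable_range ((↑) : ℚ → ℝ)).ae_notMem volume

end LawOfLargeNumbers

/-- Lochs-type theorem from continued fractions to Farey: for Lebesgue-a.e. `x`,
`log L_n(x, 𝒞ℱ, ℱ)/n → π²/(12 log 2)`. -/
theorem lochsCFtoF_ae :
    ∀ᵐ x ∂(volume.restrict (Set.Icc (0 : ℝ) 1)),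
      Tendsto (fun n : ℕ => Real.log (lochsCFtoF x n : ℝ) / (n : ℝ)) atTop
        (nhds (Real.pi ^ 2 / (12 * Real.log 2))) := by
  rw [← Measure.restrict_congr_set Ioo_ae_eq_Icc]
  have hlimit := ae_tendsto_birkhoffSum_gaussMap_neg_log_div
  rw [ae_gaussMeasure] at hlimit
  filter_upwards [hlimit, ae_restrict_of_ae ae_irrational, ae_restrict_mem measurableSet_Ioo]
    with x hx hirr hx01
  have hconst : Tendsto (fun n : ℕ ↦ Real.log 3 / n) atTop (nhds 0) :=
    tendsto_const_nhds.div_atTop tendsto_natCast_atTop_atTop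
  refine hx.congr_dist (squeeze_zero' (.of_forall fun _ ↦ dist_nonneg) ?_ hconst)
  filter_upwards [eventually_ge_atTop 2] with n hn
  rw [dist_comm, Real.dist_eq, ← sub_div, abs_div, Nat.abs_cast]
  gcongr
  exact abs_log_lochsCFtoF_sub_birkhoffSum_le hirr hx01 hn
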